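/- Fix K ≥ 0, B > 0, v ≥ 0, h ≥ 0, p ≥ 0, a horizon length n, and for each period t = 1,…,n a Borel probability measure μ_t on ℝ supported on [0,∞) with finite first moment. Define L_t(y) = ∫ (h·max(y−ξ,0) + p·max(ξ−y,0)) dμ_t(ξ), set C_0 ≡ 0, and recursively G_t(y) = v·y + L_t(y) + ∫ C_{t−1}(y−ξ) dμ_t(ξ) and C_t(x) = −v·x + min{ G_t(x), K + inf_{y ∈ [x, x+B]} G_t(y) }. Then for every t = 1,…,n, both G_t and C_t are (K,B)-convex, i.e., they satisfy both the (K,B)-convexity (i) and the (K,B)-convexity (ii) inequalities. -/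

import Mathlib

/-!
Both inequalities say that the slope `(k + g (z + b) - g z) / b` of a chord to the left of `x` is
at most the slope `(K + g (x + a) - g x) / a` of every chord starting at `x`, with `k = 0` and
arbitrary `b ≤ B` in (i), and with `k = K` and `b = B` in (ii). In this form the property visibly
survives averaging, translation and the addition of a convex function, so it passes from `C (t - 1)`
to `G t`. The Lipschitz property passes along as well; it makes the expectations finite and the
infimum over `[x, x + B]` attained.

It remains to see that `H x = min (G x) (K + min_{[x, x + B]} G)` inherits the property from `G`.
Let `S = (K + H (x + a) - H x) / a`; replaying at `x` the decision made at `x + a` shows that `S`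
dominates a slope of `G` based at or to the right of `x`. If no order is placed at `z`, compare
with the chord of `G` over `[z, z + b]`. Otherwise let `w` be the level ordered up to from `z`.
* If `S ≥ 0` and `w ≤ z + b`, the chord of `G` over `[w, z + b]` suffices: its increment is at most
  `S` times its length, hence at most `S * b`. If `w > z + b`, then `b < B`, hence `k = 0`, and the
  order to `w` is also feasible at `z + b`, so the left slope is nonpositive.
* If `S < 0`, the order at `x + a` must reach beyond `x + B`, so `S` even dominates a slope of `G`
  based at `x + B`. This allows a comparison with the chord of `G` over `[w, w + b]`, which may
  extend to the right of `x`.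
-/

open MeasureTheory

/-- `(K,B)`-convexity (i): for all `y ≤ x`, `0 < a ≤ B`, `0 < b ≤ B`,
`(K + g(x+a) − g(x))/a ≥ (g(y) − g(y−b))/b`. -/
def KBConvexI (K B : ℝ) (g : ℝ → ℝ) : Prop :=
  ∀ x y a b : ℝ, y ≤ x → 0 < a → a ≤ B → 0 < b → b ≤ B →
    (g y - g (y - b)) / b ≤ (K + g (x + a) - g x) / a

/-- `(K,B)`-convexity (ii): for all `y ≤ x`, `0 < a ≤ B`,
`(K + g(x+a) − g(x))/a ≥ (K + g(y) − g(y−B))/B`. -/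
def KBConvexII (K B : ℝ) (g : ℝ → ℝ) : Prop :=
  ∀ x y a : ℝ, y ≤ x → 0 < a → a ≤ B →
    (K + g y - g (y - B)) / B ≤ (K + g (x + a) - g x) / a

open scoped NNReal

/-- The conjunction of `(K,B)`-convexity (i) and (ii). -/
def KBConvex (K B : ℝ) (g : ℝ → ℝ) : Prop :=
  KBConvexI K B g ∧ KBConvexII K B g

/-- The slope of the chord of `g` over `[x, x + a]` after its right end has been raised by the
setup cost `k`. -/
noncomputable def setupSlope (k : ℝ) (g : ℝ → ℝ) (x a : ℝ) : ℝ :=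
  (k + g (x + a) - g x) / a

/-- Chords of length `b` raised by `k` are at most as steep as the chords to their right that have
length at most `B` and are raised by `K`. This is the common form of `(K,B)`-convexity (i), where
`k = 0`, and (ii), where `k = K` and `b = B`. -/
def SlopeDominated (K B k b : ℝ) (g : ℝ → ℝ) : Prop :=
  ∀ ⦃z x a : ℝ⦄, z + b ≤ x → 0 < a → a ≤ B → setupSlope k g z b ≤ setupSlope K g x a

variable {K B k a b x : ℝ} {f g G : ℝ → ℝ}

/-! ### Slopes of raised chords -/

theorem setupSlope_const (k c x a : ℝ) : setupSlope k (fun _ ↦ c) x a = k / a := by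
  simp [setupSlope]

theorem setupSlope_add (k : ℝ) (f g : ℝ → ℝ) (x a : ℝ) :
    setupSlope k (fun y ↦ f y + g y) x a = setupSlope 0 f x a + setupSlope k g x a := by
  simp only [setupSlope]
  ring

theorem setupSlope_comp_sub_right (k : ℝ) (g : ℝ → ℝ) (c x a : ℝ) :
    setupSlope k (fun y ↦ g (y - c)) x a = setupSlope k g (x - c) a := by
  simp only [setupSlope, sub_add_eq_add_sub]

theorem setupSlope_integral {Ω : Type*} [MeasurableSpace Ω] {μ : Measure Ω}
    [IsProbabilityMeasure μ] {F : Ω → ℝ → ℝ} (hF : ∀ y, Integrable (F · y) μ) (k x a : ℝ) :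
    setupSlope k (fun y ↦ ∫ ω, F ω y ∂μ) x a = ∫ ω, setupSlope k (F ω) x a ∂μ := by
  have hadd : Integrable (fun ω ↦ k + F ω (x + a)) μ := (integrable_const k).add (hF _)
  simp only [setupSlope, integral_div, integral_sub hadd (hF x),
    integral_add (integrable_const k) (hF (x + a)), integral_const, probReal_univ, one_smul]

theorem integrable_setupSlope {Ω : Type*} [MeasurableSpace Ω] {μ : Measure Ω}
    [IsFiniteMeasure μ] {F : Ω → ℝ → ℝ} (hF : ∀ y, Integrable (F · y) μ) (k x a : ℝ) :
    Integrable (fun ω ↦ setupSlope k (F ω) x a) μ :=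
  (((integrable_const k).add (hF (x + a))).sub (hF x)).div_const a

theorem setupSlope_zero_mono_of_convexOn (hf : ConvexOn ℝ Set.univ f) {z : ℝ} (hzx : z + b ≤ x)
    (hb : 0 < b) (ha : 0 < a) : setupSlope 0 f z b ≤ setupSlope 0 f x a := by
  have hleft := hf.secant_mono (Set.mem_univ z) (Set.mem_univ (z + b)) (Set.mem_univ (x + a))
    (by linarith) (by linarith) (by linarith)
  have hright := hf.secant_mono (Set.mem_univ (x + a)) (Set.mem_univ z) (Set.mem_univ x)
    (by linarith) (by linarith) (by linarith)
  calc setupSlope 0 f z b = (f (z + b) - f z) / (z + b - z) := by simp [setupSlope]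
    _ ≤ (f (x + a) - f z) / (x + a - z) := hleft
    _ = (f z - f (x + a)) / (z - (x + a)) := by rw [← neg_sub, ← neg_sub z, neg_div_neg_eq]
    _ ≤ (f x - f (x + a)) / (x - (x + a)) := hright
    _ = setupSlope 0 f x a := by
      rw [← neg_sub, ← neg_sub (x + a), neg_div_neg_eq, setupSlope, zero_add, add_sub_cancel_left]

/-! ### Operations preserving `(K,B)`-convexity -/

theorem kbConvexI_iff :
    KBConvexI K B g ↔ ∀ b ∈ Set.Ioc 0 B, SlopeDominated K B 0 b g := by
  constructor
  · intro hg b hb z x a hzx ha haB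
    simpa [setupSlope] using hg x (z + b) a b hzx ha haB hb.1 hb.2
  · intro hg x y a b hyx ha haB hb hbB
    simpa [setupSlope] using hg b ⟨hb, hbB⟩ (z := y - b) (by simpa using hyx) ha haB

theorem kbConvexII_iff : KBConvexII K B g ↔ SlopeDominated K B K B g := by
  constructor
  · intro hg z x a hzx ha haB
    simpa [setupSlope] using hg x (z + B) a hzx ha haB
  · intro hg x y a hyx ha haB
    simpa [setupSlope] using hg (z := y - B) (by simpa using hyx) ha haB

theorem kbConvex_iff :
    KBConvex K B g ↔
      (∀ b ∈ Set.Ioc 0 B, SlopeDominated K B 0 b g) ∧ SlopeDominated K B K B g :=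
  and_congr kbConvexI_iff kbConvexII_iff

theorem SlopeDominated.convexOn_add (hg : SlopeDominated K B k b g)
    (hf : ConvexOn ℝ Set.univ f) (hb : 0 < b) :
    SlopeDominated K B k b (fun y ↦ f y + g y) := by
  intro z x a hzx ha haB
  rw [setupSlope_add, setupSlope_add]
  exact add_le_add (setupSlope_zero_mono_of_convexOn hf hzx hb ha) (hg hzx ha haB)

theorem SlopeDominated.comp_sub_right (hg : SlopeDominated K B k b g) (c : ℝ) :
    SlopeDominated K B k b (fun y ↦ g (y - c)) := by
  intro z x a hzx ha haB
  rw [setupSlope_comp_sub_right, setupSlope_comp_sub_right]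
  exact hg (by linarith) ha haB

theorem SlopeDominated.integral {Ω : Type*} [MeasurableSpace Ω] {μ : Measure Ω}
    [IsProbabilityMeasure μ] {F : Ω → ℝ → ℝ} (hint : ∀ y, Integrable (F · y) μ)
    (hF : ∀ ω, SlopeDominated K B k b (F ω)) :
    SlopeDominated K B k b (fun y ↦ ∫ ω, F ω y ∂μ) := by
  intro z x a hzx ha haB
  rw [setupSlope_integral hint, setupSlope_integral hint]
  exact integral_mono (integrable_setupSlope hint k z b) (integrable_setupSlope hint K x a)
    fun ω ↦ hF ω hzx ha haB

theorem KBConvex.const (hK : 0 ≤ K) (c : ℝ) : KBConvex K B (fun _ ↦ c) := by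
  refine kbConvex_iff.2 ⟨fun b _ z x a _ ha _ ↦ ?_, fun z x a _ ha haB ↦ ?_⟩ <;>
    rw [setupSlope_const, setupSlope_const]
  · rw [zero_div]
    exact div_nonneg hK ha.le
  · exact div_le_div_of_nonneg_left hK ha haB

theorem KBConvex.convexOn_add (hg : KBConvex K B g) (hB : 0 < B) (hf : ConvexOn ℝ Set.univ f) :
    KBConvex K B (fun y ↦ f y + g y) := by
  obtain ⟨hI, hII⟩ := kbConvex_iff.1 hg
  exact kbConvex_iff.2 ⟨fun b hb ↦ (hI b hb).convexOn_add hf hb.1, hII.convexOn_add hf hB⟩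

theorem KBConvex.comp_sub_right (hg : KBConvex K B g) (c : ℝ) :
    KBConvex K B (fun y ↦ g (y - c)) := by
  obtain ⟨hI, hII⟩ := kbConvex_iff.1 hg
  exact kbConvex_iff.2 ⟨fun b hb ↦ (hI b hb).comp_sub_right c, hII.comp_sub_right c⟩

theorem KBConvex.integral {Ω : Type*} [MeasurableSpace Ω] {μ : Measure Ω}
    [IsProbabilityMeasure μ] {F : Ω → ℝ → ℝ} (hint : ∀ y, Integrable (F · y) μ)
    (hF : ∀ ω, KBConvex K B (F ω)) : KBConvex K B (fun y ↦ ∫ ω, F ω y ∂μ) := by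
  have hF' ω := kbConvex_iff.1 (hF ω)
  exact kbConvex_iff.2
    ⟨fun b hb ↦ .integral hint fun ω ↦ (hF' ω).1 b hb, .integral hint fun ω ↦ (hF' ω).2⟩

/-! ### The optimal ordering decision -/

/-- The cost `min (G x) (K + min_{[x, x + B]} G)` of an optimal decision at inventory level `x`,
when up to `B` units can be ordered at setup cost `K` and `G` is the cost after ordering. -/
noncomputable def orderCost (K B : ℝ) (G : ℝ → ℝ) (x : ℝ) : ℝ :=
  min (G x) (K + sInf (G '' Set.Icc x (x + B)))

theorem orderCost_le_self (K B : ℝ) (G : ℝ → ℝ) (x : ℝ) : orderCost K B G x ≤ G x :=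
  min_le_left _ _

theorem orderCost_le_add (hG : Continuous G) {w : ℝ} (hw : w ∈ Set.Icc x (x + B)) :
    orderCost K B G x ≤ K + G w := by
  refine (min_le_right _ _).trans ?_
  gcongr
  exact csInf_le (isCompact_Icc.image hG).bddBelow (Set.mem_image_of_mem G hw)

theorem orderCost_eq_self_or_exists_eq_add (hG : Continuous G) (hB : 0 ≤ B) (K x : ℝ) :
    orderCost K B G x = G x ∨ ∃ w ∈ Set.Icc x (x + B), orderCost K B G x = K + G w := by
  obtain ⟨w, hw, hGw⟩ := (isCompact_Icc.image hG).sInf_mem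
    ((Set.nonempty_Icc.2 (le_add_of_nonneg_right hB)).image G)
  refine (min_choice _ _).imp_right fun h ↦ ⟨w, hw, ?_⟩
  rw [orderCost, h, hGw]

theorem exists_setupSlope_le_setupSlope_orderCost (hG : Continuous G) (hB : 0 ≤ B) (ha : 0 < a)
    (K x : ℝ) :
    ∃ x' ≥ x, setupSlope K G x' a ≤ setupSlope K (orderCost K B G) x a := by
  rcases orderCost_eq_self_or_exists_eq_add hG hB K (x + a) with hself | ⟨w, hw, hord⟩
  · refine ⟨x, le_rfl, div_le_div_of_nonneg_right ?_ ha.le⟩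
    linarith [orderCost_le_self K B G x]
  · refine ⟨w - a, by linarith [hw.1], div_le_div_of_nonneg_right ?_ ha.le⟩
    have hshift : orderCost K B G x ≤ K + G (w - a) :=
      orderCost_le_add hG ⟨by linarith [hw.1], by linarith [hw.2]⟩
    rw [sub_add_cancel]
    linarith

theorem exists_setupSlope_le_setupSlope_orderCost_of_neg (hG : Continuous G) (hK : 0 ≤ K)
    (ha : 0 < a) (haB : a ≤ B) (hneg : setupSlope K (orderCost K B G) x a < 0) :
    ∃ a' ∈ Set.Ioc 0 B,
      setupSlope K G (x + B) a' ≤ setupSlope K (orderCost K B G) x a := by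
  have hdrop : K + orderCost K B G (x + a) - orderCost K B G x < 0 := by
    simpa using (div_lt_iff₀ ha).1 hneg
  rcases orderCost_eq_self_or_exists_eq_add hG (ha.le.trans haB) K (x + a) with
    hself | ⟨w, hw, hord⟩
  · have := orderCost_le_add (K := K) hG (⟨by linarith, by linarith⟩ : x + a ∈ Set.Icc x (x + B))
    linarith
  · have hwx : x + B < w := by
      by_contra! hle
      have := orderCost_le_add (K := K) hG (⟨by linarith [hw.1], hle⟩ : w ∈ Set.Icc x (x + B))
      linarith
    have hfull : orderCost K B G x ≤ K + G (x + B) := orderCost_le_add hG ⟨by linarith, le_rfl⟩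
    refine ⟨w - (x + B), ⟨by linarith, by linarith [hw.2]⟩, ?_⟩
    -- The numerator is negative, so shortening the step from `a` to `w - (x + B)` lowers the slope.
    calc setupSlope K G (x + B) (w - (x + B))
        = (K + G w - G (x + B)) / (w - (x + B)) := by rw [setupSlope, add_sub_cancel]
      _ ≤ (K + orderCost K B G (x + a) - orderCost K B G x) / (w - (x + B)) :=
        div_le_div_of_nonneg_right (by linarith) (by linarith)
      _ ≤ setupSlope K (orderCost K B G) x a := by
        rw [setupSlope, div_eq_mul_inv, div_eq_mul_inv]
        exact mul_le_mul_of_nonpos_left (inv_anti₀ (by linarith) (by linarith [hw.2])) hdrop.le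

theorem sub_le_mul_of_setupSlope_le (hI : ∀ b ∈ Set.Ioc 0 B, SlopeDominated K B 0 b G)
    {w y S : ℝ} (hwy : w ≤ y) (hyw : y ≤ w + b) (hbB : b ≤ B) (hyx : y ≤ x) (ha : 0 < a)
    (haB : a ≤ B) (hS : 0 ≤ S) (hslope : setupSlope K G x a ≤ S) : G y - G w ≤ S * b := by
  rcases hwy.eq_or_lt with rfl | hlt
  · rw [sub_self]
    exact mul_nonneg hS (by linarith)
  · have hchord : setupSlope 0 G w (y - w) ≤ S :=
      (hI (y - w) ⟨by linarith, by linarith⟩ (by linarith) ha haB).trans hslope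
    rw [setupSlope, add_sub_cancel, zero_add, div_le_iff₀ (by linarith)] at hchord
    exact hchord.trans (mul_le_mul_of_nonneg_left (by linarith) hS)

theorem slopeDominated_orderCost (hG : Continuous G) (hK : 0 ≤ K) (hkK : k ≤ K)
    (hb : b ∈ Set.Ioc 0 B) (hkb : k ≤ 0 ∨ b = B)
    (hI : ∀ b ∈ Set.Ioc 0 B, SlopeDominated K B 0 b G) (hd : SlopeDominated K B k b G) :
    SlopeDominated K B k b (orderCost K B G) := by
  intro z x a hzx ha haB
  obtain ⟨hb₀, hbB⟩ := hb
  have hB : 0 ≤ B := hb₀.le.trans hbB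
  have hself := orderCost_le_self K B G (z + b)
  obtain ⟨x', hx', hslope⟩ := exists_setupSlope_le_setupSlope_orderCost hG hB ha K x
  rcases orderCost_eq_self_or_exists_eq_add hG hB K z with hz | ⟨w, ⟨hzw, hwz⟩, hz⟩
  · refine le_trans ?_ ((hd (hzx.trans hx') ha haB).trans hslope)
    exact div_le_div_of_nonneg_right (by linarith) hb₀.le
  rcases le_or_gt 0 (setupSlope K (orderCost K B G) x a) with hpos | hneg
  · rw [setupSlope, div_le_iff₀ hb₀]
    rcases le_or_gt w (z + b) with hle | hgt
    · have := sub_le_mul_of_setupSlope_le hI hle (by linarith) hbB (hzx.trans hx') ha haB hpos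
        hslope
      linarith
    · have hk : k ≤ 0 := hkb.resolve_right fun h ↦ by linarith
      have hord : orderCost K B G (z + b) ≤ K + G w := orderCost_le_add hG ⟨hgt.le, by linarith⟩
      linarith [mul_nonneg hpos hb₀.le]
  · obtain ⟨a', ha', hslope'⟩ := exists_setupSlope_le_setupSlope_orderCost_of_neg hG hK ha haB hneg
    have hord : orderCost K B G (z + b) ≤ K + G (w + b) :=
      orderCost_le_add hG ⟨by linarith, by linarith⟩
    refine le_trans ?_ ((hd (by linarith : w + b ≤ x + B) ha'.1 ha'.2).trans hslope')
    exact div_le_div_of_nonneg_right (by linarith) hb₀.le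

theorem kbConvex_orderCost (hg : KBConvex K B G) (hG : Continuous G) (hK : 0 ≤ K) (hB : 0 < B) :
    KBConvex K B (orderCost K B G) := by
  obtain ⟨hI, hII⟩ := kbConvex_iff.1 hg
  exact kbConvex_iff.2 ⟨fun b hb ↦ slopeDominated_orderCost hG hK hK hb (.inl le_rfl) hI (hI b hb),
    slopeDominated_orderCost hG hK le_rfl ⟨hB, le_rfl⟩ (.inr rfl) hI hII⟩

theorem lipschitzWith_orderCost {l : ℝ≥0} (hG : LipschitzWith l G) (hB : 0 ≤ B) (K : ℝ) :
    LipschitzWith l (orderCost K B G) := by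
  refine LipschitzWith.of_le_add_mul l fun x y ↦ ?_
  rcases orderCost_eq_self_or_exists_eq_add hG.continuous hB K y with hself | ⟨w, hw, hord⟩
  · linarith [orderCost_le_self K B G x, hG.le_add_mul x y]
  · -- An optimal order at `y` stays feasible when translated to `x`.
    have hfeas : orderCost K B G x ≤ K + G (x + (w - y)) :=
      orderCost_le_add hG.continuous ⟨by linarith [hw.1], by linarith [hw.2]⟩
    have hshift := hG.le_add_mul (x + (w - y)) (y + (w - y))
    rw [dist_add_right, add_sub_cancel] at hshift
    linarith

/-! ### Expectations of Lipschitz functions -/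

theorem integrable_comp_of_lipschitzWith {Ω E F : Type*} [MeasurableSpace Ω]
    [NormedAddCommGroup E] [NormedAddCommGroup F] {μ : Measure Ω} [IsFiniteMeasure μ] {φ : E → F}
    {X : Ω → E} {l : ℝ≥0} (hφ : LipschitzWith l φ) (hX : Integrable X μ) :
    Integrable (fun ω ↦ φ (X ω)) μ := by
  have hcentered : LipschitzWith l (fun y ↦ φ y - φ 0) := by
    simpa using hφ.sub (LipschitzWith.const (φ 0))
  have hmem := hcentered.comp_memLp (sub_self _) (memLp_one_iff_integrable.2 hX)
  refine ((memLp_one_iff_integrable.1 hmem).add (integrable_const (φ 0))).congr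
    (.of_forall fun ω ↦ ?_)
  simp

theorem integrable_comp_sub_of_lipschitzWith {μ : Measure ℝ} [IsFiniteMeasure μ] {l : ℝ≥0}
    (hg : LipschitzWith l g) (hμ : Integrable (fun ξ : ℝ ↦ ξ) μ) (y : ℝ) :
    Integrable (fun ξ ↦ g (y - ξ)) μ :=
  integrable_comp_of_lipschitzWith hg ((integrable_const y).sub hμ)

theorem lipschitzWith_integral {Ω α E : Type*} [MeasurableSpace Ω] [PseudoMetricSpace α]
    [NormedAddCommGroup E] [NormedSpace ℝ E] {μ : Measure Ω} [IsProbabilityMeasure μ]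
    {F : Ω → α → E} {l : ℝ≥0}
    (hint : ∀ y, Integrable (F · y) μ) (hF : ∀ ω, LipschitzWith l (F ω)) :
    LipschitzWith l (fun y ↦ ∫ ω, F ω y ∂μ) := by
  refine LipschitzWith.of_dist_le_mul fun x y ↦ ?_
  rw [dist_eq_norm, ← integral_sub (hint x) (hint y)]
  refine (norm_integral_le_of_norm_le_const (.of_forall fun ω ↦ ?_)).trans_eq
    (by rw [probReal_univ, mul_one])
  simpa only [dist_eq_norm] using (hF ω).dist_le_mul x y

/-! ### The cost recursion -/

/-- The class of functions preserved by the recursion: `(K,B)`-convex functions with the Lipschitz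
property, which makes expectations finite and infima over compact intervals attained. -/
structure IsKBCost (K B : ℝ) (g : ℝ → ℝ) : Prop where
  kbConvex : KBConvex K B g
  lipschitz : ∃ l, LipschitzWith l g

theorem IsKBCost.const (hK : 0 ≤ K) (c : ℝ) : IsKBCost K B (fun _ ↦ c) :=
  ⟨.const hK c, 0, .const c⟩

theorem IsKBCost.convexOn_add (hg : IsKBCost K B g) (hB : 0 < B) (hf : ConvexOn ℝ Set.univ f)
    {l : ℝ≥0} (hfl : LipschitzWith l f) : IsKBCost K B (fun y ↦ f y + g y) := by
  obtain ⟨m, hgm⟩ := hg.lipschitz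
  exact ⟨hg.kbConvex.convexOn_add hB hf, l + m, hfl.add hgm⟩

theorem IsKBCost.linear_add (hg : IsKBCost K B g) (hB : 0 < B) (c : ℝ) :
    IsKBCost K B (fun y ↦ c * y + g y) :=
  hg.convexOn_add hB ((LinearMap.mulLeft ℝ c).convexOn convex_univ) (lipschitzWith_smul c)

theorem IsKBCost.integral_comp_sub (hg : IsKBCost K B g) {μ : Measure ℝ} [IsProbabilityMeasure μ]
    (hμ : Integrable (fun ξ : ℝ ↦ ξ) μ) : IsKBCost K B (fun y ↦ ∫ ξ, g (y - ξ) ∂μ) := by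
  obtain ⟨l, hl⟩ := hg.lipschitz
  have hint := integrable_comp_sub_of_lipschitzWith hl hμ
  refine ⟨.integral hint fun ξ ↦ hg.kbConvex.comp_sub_right ξ, l,
    lipschitzWith_integral hint fun ξ ↦ ?_⟩
  simpa [Function.comp_def] using hl.comp (LipschitzWith.id.sub (LipschitzWith.const ξ))

theorem IsKBCost.linear_add_integral_add_integral (hg : IsKBCost K B g) (hB : 0 < B) (v : ℝ)
    {c : ℝ → ℝ} (hc : ConvexOn ℝ Set.univ c) {l : ℝ≥0} (hcl : LipschitzWith l c)
    {μ : Measure ℝ} [IsProbabilityMeasure μ] (hμ : Integrable (fun ξ : ℝ ↦ ξ) μ) :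
    IsKBCost K B (fun y ↦ v * y + ∫ ξ, c (y - ξ) ∂μ + ∫ ξ, g (y - ξ) ∂μ) := by
  obtain ⟨m, hgm⟩ := hg.lipschitz
  have hsplit (y : ℝ) :
      ∫ ξ, (c (y - ξ) + g (y - ξ)) ∂μ = ∫ ξ, c (y - ξ) ∂μ + ∫ ξ, g (y - ξ) ∂μ :=
    integral_add (integrable_comp_sub_of_lipschitzWith hcl hμ y)
      (integrable_comp_sub_of_lipschitzWith hgm hμ y)
  simpa only [hsplit, add_assoc] using
    ((hg.convexOn_add hB hc hcl).integral_comp_sub hμ).linear_add hB v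

theorem isKBCost_orderCost (hg : IsKBCost K B G) (hK : 0 ≤ K) (hB : 0 < B) :
    IsKBCost K B (orderCost K B G) := by
  obtain ⟨l, hl⟩ := hg.lipschitz
  exact ⟨kbConvex_orderCost hg.kbConvex hl.continuous hK hB, l, lipschitzWith_orderCost hl hB.le K⟩

/-- The cost of leftover inventory `z`: holding cost `h` per unit in stock, penalty `p` per unit
of backlog. -/
noncomputable def newsvendorCost (h p z : ℝ) : ℝ :=
  h * max z 0 + p * max (-z) 0

theorem convexOn_newsvendorCost {h p : ℝ} (hh : 0 ≤ h) (hp : 0 ≤ p) :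
    ConvexOn ℝ Set.univ (newsvendorCost h p) := by
  have hpos : ConvexOn ℝ Set.univ fun z : ℝ ↦ max z 0 :=
    (convexOn_id convex_univ).sup (convexOn_const 0 convex_univ)
  have hneg : ConvexOn ℝ Set.univ fun z : ℝ ↦ max (-z) 0 :=
    (concaveOn_id convex_univ).neg.sup (convexOn_const 0 convex_univ)
  exact (hpos.smul hh).add (hneg.smul hp)

theorem lipschitzWith_newsvendorCost (h p : ℝ) :
    LipschitzWith (‖h‖₊ + ‖p‖₊) (newsvendorCost h p) := by
  simpa only [mul_one] using! ((lipschitzWith_smul h).comp (LipschitzWith.id.max_const 0)).add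
    ((lipschitzWith_smul p).comp (LipschitzWith.id.neg.max_const 0))

theorem capacitated_cost_to_go_KB_convex_general
    (K B v : ℝ) (hK : 0 ≤ K) (hB : 0 < B)
    (c : ℝ → ℝ) (hc : ConvexOn ℝ Set.univ c) (l : ℝ≥0) (hcl : LipschitzWith l c)
    (n : ℕ) (μ : ℕ → Measure ℝ)
    (hprob : ∀ t, 1 ≤ t → t ≤ n → IsProbabilityMeasure (μ t))
    (hmom : ∀ t, 1 ≤ t → t ≤ n → Integrable (fun ξ : ℝ ↦ ξ) (μ t))
    (L G C : ℕ → ℝ → ℝ)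
    (hL : ∀ t, 1 ≤ t → t ≤ n → ∀ y : ℝ, L t y = ∫ ξ, c (y - ξ) ∂(μ t))
    (hC0 : IsKBCost K B (C 0))
    (hG : ∀ t, 1 ≤ t → t ≤ n → ∀ y : ℝ,
      G t y = v * y + L t y + ∫ ξ, C (t - 1) (y - ξ) ∂(μ t))
    (hC : ∀ t, 1 ≤ t → t ≤ n → ∀ x : ℝ,
      C t x = -v * x + min (G t x) (K + sInf (G t '' Set.Icc x (x + B)))) :
    ∀ t, 1 ≤ t → t ≤ n → KBConvex K B (G t) ∧ KBConvex K B (C t) := by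
  have step (t : ℕ) (h1 : 1 ≤ t) (hn : t ≤ n) (ht : IsKBCost K B (C (t - 1))) :
      IsKBCost K B (G t) ∧ IsKBCost K B (C t) := by
    have := hprob t h1 hn
    have hGt : IsKBCost K B (G t) := by
      rw [funext (hG t h1 hn), funext (hL t h1 hn)]
      exact ht.linear_add_integral_add_integral hB v hc hcl (hmom t h1 hn)
    refine ⟨hGt, ?_⟩
    rw [funext (hC t h1 hn)]
    exact (isKBCost_orderCost hGt hK hB).linear_add hB (-v)
  have hCost (t : ℕ) (hn : t ≤ n) : IsKBCost K B (C t) := by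
    induction t with
    | zero => exact hC0
    | succ t ih => exact (step (t + 1) t.succ_pos hn (ih (by omega))).2
  intro t h1 hn
  exact (step t h1 hn (hCost (t - 1) (by omega))).imp IsKBCost.kbConvex IsKBCost.kbConvex

/-- The cost-to-go functions `G_t` and `C_t` of the single-item capacitated stochastic
inventory problem with fixed ordering cost `K ≥ 0`, order capacity `B > 0`, unit ordering
cost `v ≥ 0`, holding cost `h ≥ 0`, penalty cost `p ≥ 0`, and demand distribution `μ t`
in period `t` (a Borel probability measure on `ℝ` supported on `[0,∞)` with finite first
moment) are `(K,B)`-convex for every period `t = 1, …, n`. -/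
theorem capacitated_cost_to_go_KB_convex
    (K B v h p : ℝ) (hK : 0 ≤ K) (hB : 0 < B) (hv : 0 ≤ v) (hh : 0 ≤ h) (hp : 0 ≤ p)
    (n : ℕ) (μ : ℕ → Measure ℝ)
    (hprob : ∀ t, 1 ≤ t → t ≤ n → IsProbabilityMeasure (μ t))
    (hsupp : ∀ t, 1 ≤ t → t ≤ n → μ t (Set.Iio 0) = 0)
    (hmom : ∀ t, 1 ≤ t → t ≤ n → Integrable (fun ξ : ℝ => ξ) (μ t))
    (L G C : ℕ → ℝ → ℝ)
    (hL : ∀ t, 1 ≤ t → t ≤ n → ∀ y : ℝ,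
      L t y = ∫ ξ, (h * max (y - ξ) 0 + p * max (ξ - y) 0) ∂(μ t))
    (hC0 : ∀ x : ℝ, C 0 x = 0)
    (hG : ∀ t, 1 ≤ t → t ≤ n → ∀ y : ℝ,
      G t y = v * y + L t y + ∫ ξ, C (t - 1) (y - ξ) ∂(μ t))
    (hC : ∀ t, 1 ≤ t → t ≤ n → ∀ x : ℝ,
      C t x = -v * x + min (G t x) (K + sInf (G t '' Set.Icc x (x + B)))) :
    ∀ t, 1 ≤ t → t ≤ n →
      (KBConvexI K B (G t) ∧ KBConvexII K B (G t)) ∧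
      (KBConvexI K B (C t) ∧ KBConvexII K B (C t)) := by
  exact capacitated_cost_to_go_KB_convex_general K B v hK hB
    (newsvendorCost h p) (convexOn_newsvendorCost hh hp) _ (lipschitzWith_newsvendorCost h p)
    n μ hprob hmom L G C (by simpa only [newsvendorCost, neg_sub] using hL)
    (funext hC0 ▸ IsKBCost.const hK 0) hG hC
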